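/- The kneading group K is not residually finite: there exists g ∈ K with g ≠ 1 such that φ(g) = 1 for every group homomorphism φ from K to any finite group. -/

import Mathlib

/-- States of the kneading automaton: `a i` is the paper's `a_{i+1}` (for `i < k`),
`b i` is the paper's `b_{i+1}` (for `i < p`), and `id` is the identity state. -/
inductive KState : Type
  | a (i : ℕ)
  | b (i : ℕ)
  | id
  deriving DecidableEq

/-- Transition function of the kneading automaton `𝒦(x₁…x_k, y₁…y_p)`, where the paper's
`x_i` is `x (i-1)` and `y_i` is `y (i-1)`.  `KTrans k p x y s z = (output letter, restriction)`. -/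
def KTrans (k p : ℕ) (x y : ℕ → ℤ) : KState → ℤ → ℤ × KState
  | .a 0, z => (z + 1, .id)
  | .a (i+1), z => if z = x i then (z, .a i) else (z, .id)
  | .b 0, z =>
      if z = x (k-1) then (z, .a (k-1))
      else if z = y (p-1) then (z, .b (p-1))
      else (z, .id)
  | .b (i+1), z => if z = y i then (z, .b i) else (z, .id)
  | .id, z => (z, .id)

/-- The action of a state on the tree `ℤ*` of finite words over `ℤ`,
defined recursively by `q(zv) = q(z)·(q|_z)(v)`. -/
def stateAct (k p : ℕ) (x y : ℕ → ℤ) : KState → List ℤ → List ℤ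
  | _, [] => []
  | s, z :: v => (KTrans k p x y s z).1 :: stateAct k p x y (KTrans k p x y s z).2 v

/-- The generating states `S = {a₁,…,a_k, b₁,…,b_p}`. -/
def IsGen (k p : ℕ) (s : KState) : Prop :=
  (∃ i, i < k ∧ s = .a i) ∨ (∃ j, j < p ∧ s = .b j)

/-- The generators of the kneading group, as permutations of `List ℤ` whose underlying
function is the action of a generating state. -/
def SGens (k p : ℕ) (x y : ℕ → ℤ) : Set (Equiv.Perm (List ℤ)) :=
  {g | ∃ s : KState, IsGen k p s ∧ ⇑g = stateAct k p x y s}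

/-- The kneading group `K = 𝕂(x₁…x_k, y₁…y_p)`. -/
def Kgroup (k p : ℕ) (x y : ℕ → ℤ) : Subgroup (Equiv.Perm (List ℤ)) :=
  Subgroup.closure (SGens k p x y)

/-!
Write `a` for the shift `a₁`. A state `s ≠ a₁` fixes every word outside finitely many first-level
subtrees, and conjugation by `a ^ n` translates these subtrees by `n`. Hence if `g` and `h` are
such permutations, then `a ^ n * g * a ^ (-n)` and `h` have disjoint supports, so commute, for all
large `n`. In a quotient where `a` has finite order, `n` can be taken to be a multiple of that
order, so the images of `g` and `h` commute there: `⁅g, h⁆` dies in every torsion quotient.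

The commutator is nontrivial for suitable `g` and `h`: some generator restricts to `a₁` and some
conjugate of a generator restricts to `b₁` on the same first-level subtree, and `a₁` and `b₁` do
not commute because conjugation by powers of `a₁` moves the support of `b₁` off itself.
-/

open Equiv Filter
open scoped Pointwise commutatorElement

theorem map_commutatorElement_eq_one_of_eventually_commute_conj {G F : Type*} [Group G] [Group F]
    (φ : G →* F) {a g h : G} (ha : IsOfFinOrder (φ a))
    (hcomm : ∀ᶠ n : ℕ in atTop, Commute (a ^ n * g * (a ^ n)⁻¹) h) : φ ⁅g, h⁆ = 1 := by
  have hmultiples : Tendsto (orderOf (φ a) * ·) atTop atTop :=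
    tendsto_id.const_mul_atTop' ha.orderOf_pos
  obtain ⟨m, hm⟩ := (hmultiples.eventually hcomm).exists
  have hpow : φ a ^ (orderOf (φ a) * m) = 1 := by rw [pow_mul, pow_orderOf_eq_one, one_pow]
  rw [map_commutatorElement, commutatorElement_eq_one_iff_commute]
  simpa only [map_mul, map_inv, map_pow, hpow, one_mul, inv_one, mul_one] using hm.map φ

theorem eventually_disjoint_natCast_vadd {A B : Set ℤ} (hA : A.Finite) (hB : B.Finite) :
    ∀ᶠ n : ℕ in atTop, Disjoint ((n : ℤ) +ᵥ A) B := by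
  have hcast : Tendsto ((↑) : ℕ → ℤ) atTop cofinite :=
    Nat.cofinite_eq_atTop ▸ Nat.cast_injective.tendsto_cofinite
  filter_upwards [hcast.eventually (hB.sub hA).eventually_cofinite_notMem] with n hn
  rw [Set.disjoint_left]
  rintro _ ⟨z, hz, rfl⟩ hzB
  exact hn ⟨_, hzB, z, hz, add_sub_cancel_right _ z⟩

section WordPermutations

variable {α : Type*}

/-- The rooted automorphism of the tree of words induced by a permutation `σ` of the alphabet: it
applies `σ` to the first letter and leaves the other letters alone. -/
def rooted : Perm α →* Perm (List α) where
  toFun σ :=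
    { toFun := List.modifyHead σ
      invFun := List.modifyHead σ.symm
      left_inv := fun w => by simp
      right_inv := fun w => by simp }
  map_one' := by ext1 w; cases w <;> rfl
  map_mul' σ τ := by ext1 w; cases w <;> rfl

theorem rooted_nil (σ : Perm α) : rooted σ [] = [] := rfl

theorem rooted_cons (σ : Perm α) (z : α) (w : List α) : rooted σ (z :: w) = σ z :: w := rfl

/-- `HasSection g z h` says that `g` maps the subtree of words beginning with `z` to itself and
acts on it as `h`: the letter `z` is fixed and the restriction `g|_z` is `h`. -/
def HasSection (g : Perm (List α)) (z : α) (h : Perm (List α)) : Prop :=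
  ∀ w, g (z :: w) = z :: h w

theorem HasSection.ne_one {g h : Perm (List α)} {z : α} (hg : HasSection g z h) (hh : h ≠ 1) :
    g ≠ 1 := by
  rintro rfl
  exact hh (Perm.ext fun w => (List.cons_injective (hg w)).symm)

theorem HasSection.commute {g₁ g₂ h₁ h₂ : Perm (List α)} {z : α} (hg₁ : HasSection g₁ z h₁)
    (hg₂ : HasSection g₂ z h₂) (hcomm : Commute g₁ g₂) : Commute h₁ h₂ := by
  ext1 w
  have h := congrArg (· (z :: w)) hcomm.eq
  simpa only [Perm.mul_apply, hg₁ _, hg₂ _, List.cons.injEq, true_and] using h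

theorem HasSection.conj_rooted {g h : Perm (List α)} {z : α} (hg : HasSection g z h)
    (σ : Perm α) : HasSection (rooted σ * g * (rooted σ)⁻¹) (σ z) h := by
  intro w
  have hinv : (rooted σ)⁻¹ (σ z :: w) = z :: w := (rooted σ).symm_apply_apply (z :: w)
  rw [Perm.mul_apply, Perm.mul_apply, hinv, hg, rooted_cons]

/-- The letters `z` for which `g` moves some word beginning with `z`. -/
def activeLetters (g : Perm (List α)) : Set α :=
  {z | ∃ w, g (z :: w) ≠ z :: w}

theorem activeLetters_conj_rooted (g : Perm (List α)) (σ : Perm α) :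
    activeLetters (rooted σ * g * (rooted σ)⁻¹) = σ '' activeLetters g := by
  ext z
  rw [σ.image_eq_preimage_symm]
  refine exists_congr fun w => not_congr ?_
  rw [Perm.mul_apply, Perm.mul_apply, ← Perm.eq_inv_iff_eq, ← map_inv, rooted_cons]
  rfl

theorem disjoint_of_disjoint_activeLetters {g h : Perm (List α)} (hnil : g [] = [])
    (hdisj : Disjoint (activeLetters g) (activeLetters h)) : g.Disjoint h := by
  rintro (_ | ⟨z, w⟩)
  · exact Or.inl hnil
  · by_contra! hmoved
    exact Set.disjoint_left.mp hdisj ⟨w, hmoved.1⟩ ⟨w, hmoved.2⟩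

/-- A permutation of words is finitely active if it fixes the empty word and all words outside
finitely many first-level subtrees. -/
structure FinitelyActive (g : Perm (List α)) : Prop where
  map_nil : g [] = []
  finite_activeLetters : (activeLetters g).Finite

theorem FinitelyActive.conj_rooted {g : Perm (List α)} (hg : FinitelyActive g) (σ : Perm α) :
    FinitelyActive (rooted σ * g * (rooted σ)⁻¹) where
  map_nil := by
    rw [← map_inv, Perm.mul_apply, Perm.mul_apply, rooted_nil, hg.map_nil, rooted_nil]
  finite_activeLetters := by
    rw [activeLetters_conj_rooted]
    exact hg.finite_activeLetters.image σ

end WordPermutations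

section Shift

/-- The rooted automorphism of the tree of integer words adding `1` to the first letter. It is the
action of the state `a₁` of every kneading automaton. -/
def shift : Perm (List ℤ) :=
  rooted (Equiv.addRight 1)

theorem shift_zpow (n : ℤ) : shift ^ n = rooted (Equiv.addRight n) := by
  rw [shift, ← map_zpow, Equiv.zsmul_addRight, smul_eq_mul, mul_one]

theorem activeLetters_conj_shift_pow (g : Perm (List ℤ)) (n : ℕ) :
    activeLetters (shift ^ n * g * (shift ^ n)⁻¹) = (n : ℤ) +ᵥ activeLetters g := by
  rw [← zpow_natCast, shift_zpow, activeLetters_conj_rooted]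
  exact Set.image_congr fun z _ => add_comm z n

variable {g h b : Perm (List ℤ)}

theorem FinitelyActive.conj_shift_zpow (hg : FinitelyActive g) (n : ℤ) :
    FinitelyActive (shift ^ n * g * (shift ^ n)⁻¹) :=
  shift_zpow n ▸ hg.conj_rooted _

theorem HasSection.conj_shift_zpow {z : ℤ} (hg : HasSection g z h) (n : ℤ) :
    HasSection (shift ^ n * g * (shift ^ n)⁻¹) (z + n) h :=
  shift_zpow n ▸ hg.conj_rooted _

theorem FinitelyActive.eventually_disjoint_conj_shift_pow (hg : FinitelyActive g)
    (hh : FinitelyActive h) :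
    ∀ᶠ n : ℕ in atTop, (shift ^ n * g * (shift ^ n)⁻¹).Disjoint h := by
  filter_upwards [eventually_disjoint_natCast_vadd hg.finite_activeLetters
    hh.finite_activeLetters] with n hn
  rw [← activeLetters_conj_shift_pow] at hn
  exact disjoint_of_disjoint_activeLetters (mod_cast (hg.conj_shift_zpow n).map_nil) hn

theorem FinitelyActive.not_commute_shift (hg : FinitelyActive g) (hg_ne : g ≠ 1) :
    ¬ Commute shift g := by
  intro hcomm
  obtain ⟨n, hn⟩ := (hg.eventually_disjoint_conj_shift_pow hg).exists
  rw [(hcomm.pow_left n).eq, mul_inv_cancel_right] at hn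
  exact hg_ne (Perm.disjoint_refl_iff.mp hn)

theorem exists_ne_one_forall_map_eq_one_of_isOfFinOrder_map_shift.{u}
    {G : Subgroup (Perm (List ℤ))} (hshift : shift ∈ G) (hgG : g ∈ G) (hhG : h ∈ G)
    (hg : FinitelyActive g) (hh : FinitelyActive h) (hb : FinitelyActive b) (hb_ne : b ≠ 1)
    {u v : ℤ} (hgu : HasSection g u shift) (hhv : HasSection h v b) :
    ∃ c : G, c ≠ 1 ∧ ∀ (F : Type u) [Group F] (φ : G →* F),
      IsOfFinOrder (φ ⟨shift, hshift⟩) → φ c = 1 := by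
  let a' : G := ⟨shift, hshift⟩
  let g' : G := ⟨g, hgG⟩
  let h' : G := a' ^ (u - v) * ⟨h, hhG⟩ * (a' ^ (u - v))⁻¹
  have hh'u : HasSection (h' : Perm (List ℤ)) u b := by
    have h := hhv.conj_shift_zpow (u - v)
    rwa [add_sub_cancel] at h
  refine ⟨⁅g', h'⁆, fun hone => ?_, fun F _ φ hφ => ?_⟩
  · have hcomm : Commute g (h' : Perm (List ℤ)) :=
      (commutatorElement_eq_one_iff_commute.mp hone).map G.subtype
    exact hb.not_commute_shift hb_ne (hgu.commute hh'u hcomm)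
  · refine map_commutatorElement_eq_one_of_eventually_commute_conj φ hφ ?_
    filter_upwards [hg.eventually_disjoint_conj_shift_pow (hh.conj_shift_zpow (u - v))] with n hn
    exact Subtype.ext hn.commute.eq

end Shift

section KneadingAutomaton

variable (k p : ℕ) (x y : ℕ → ℤ)

theorem KTrans_fst_of_ne_a_zero {s : KState} (hs : s ≠ .a 0) (z : ℤ) :
    (KTrans k p x y s z).1 = z := by
  rcases s with (_ | i) | (_ | i) | _
  · exact absurd rfl hs
  all_goals grind [KTrans]

theorem KTrans_fst_bijective (s : KState) :
    Function.Bijective fun z => (KTrans k p x y s z).1 := by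
  by_cases hs : s = .a 0
  · subst hs
    exact (Equiv.addRight (1 : ℤ)).bijective
  · rw [funext (KTrans_fst_of_ne_a_zero k p x y hs)]
    exact Function.bijective_id

theorem finite_setOf_KTrans_snd_ne_id (s : KState) :
    {z | (KTrans k p x y s z).2 ≠ .id}.Finite := by
  rcases s with (_ | i) | (_ | i) | _
  · exact Set.finite_empty.subset fun z hz => hz rfl
  · exact (Set.finite_singleton (x i)).subset fun z hz => by grind [KTrans]
  · exact (Set.toFinite {x (k - 1), y (p - 1)}).subset fun z hz => by grind [KTrans]
  · exact (Set.finite_singleton (y i)).subset fun z hz => by grind [KTrans]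
  · exact Set.finite_empty.subset fun z hz => hz rfl

theorem stateAct_id (w : List ℤ) : stateAct k p x y .id w = w := by
  induction w with
  | nil => rfl
  | cons z w ih => exact congrArg (z :: ·) ih

theorem stateAct_injective (s : KState) : Function.Injective (stateAct k p x y s) := by
  intro v
  induction v generalizing s with
  | nil => rintro (_ | _) h <;> simp_all [stateAct]
  | cons z v ih =>
    rintro (_ | ⟨z', v'⟩) h
    · simp [stateAct] at h
    · obtain ⟨hhead, htail⟩ := List.cons.inj h
      obtain rfl : z = z' := (KTrans_fst_bijective k p x y s).injective hhead
      rw [ih _ htail]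

theorem stateAct_surjective (s : KState) : Function.Surjective (stateAct k p x y s) := by
  intro v
  induction v generalizing s with
  | nil => exact ⟨[], rfl⟩
  | cons z v ih =>
    obtain ⟨z', rfl⟩ := (KTrans_fst_bijective k p x y s).surjective z
    obtain ⟨w, rfl⟩ := ih (KTrans k p x y s z').2
    exact ⟨z' :: w, rfl⟩

/-- The automorphism of the tree of integer words induced by a state of the kneading automaton. -/
noncomputable def statePerm (s : KState) : Perm (List ℤ) :=
  Equiv.ofBijective (stateAct k p x y s)
    ⟨stateAct_injective k p x y s, stateAct_surjective k p x y s⟩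

theorem statePerm_cons (s : KState) (z : ℤ) (w : List ℤ) :
    statePerm k p x y s (z :: w) =
      (KTrans k p x y s z).1 :: statePerm k p x y (KTrans k p x y s z).2 w := rfl

theorem statePerm_id : statePerm k p x y .id = 1 :=
  Perm.ext (stateAct_id k p x y)

theorem statePerm_a_zero : statePerm k p x y (.a 0) = shift := by
  ext1 (_ | ⟨z, w⟩)
  · rfl
  · exact congrArg ((z + 1) :: ·) (stateAct_id k p x y w)

variable {k p x y}

theorem statePerm_mem_Kgroup {s : KState} (hs : IsGen k p s) :
    statePerm k p x y s ∈ Kgroup k p x y :=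
  Subgroup.subset_closure ⟨s, hs, rfl⟩

theorem hasSection_statePerm {s t : KState} {z : ℤ} (h : KTrans k p x y s z = (z, t)) :
    HasSection (statePerm k p x y s) z (statePerm k p x y t) := by
  intro w
  rw [statePerm_cons, h]

theorem finitelyActive_statePerm {s : KState} (hs : s ≠ .a 0) :
    FinitelyActive (statePerm k p x y s) where
  map_nil := rfl
  finite_activeLetters := by
    refine (finite_setOf_KTrans_snd_ne_id k p x y s).subset ?_
    rintro z ⟨w, hw⟩ hid
    rw [statePerm_cons, KTrans_fst_of_ne_a_zero k p x y hs, hid, statePerm_id] at hw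
    exact hw rfl

theorem hasSection_statePerm_a_succ (i : ℕ) :
    HasSection (statePerm k p x y (.a (i + 1))) (x i) (statePerm k p x y (.a i)) :=
  hasSection_statePerm (if_pos rfl)

theorem hasSection_statePerm_b_succ (j : ℕ) :
    HasSection (statePerm k p x y (.b (j + 1))) (y j) (statePerm k p x y (.b j)) :=
  hasSection_statePerm (if_pos rfl)

theorem hasSection_statePerm_b_zero_a :
    HasSection (statePerm k p x y (.b 0)) (x (k - 1)) (statePerm k p x y (.a (k - 1))) :=
  hasSection_statePerm (if_pos rfl)

theorem hasSection_statePerm_b_zero_b (hxy : x (k - 1) ≠ y (p - 1)) :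
    HasSection (statePerm k p x y (.b 0)) (y (p - 1)) (statePerm k p x y (.b (p - 1))) :=
  hasSection_statePerm ((if_neg hxy.symm).trans (if_pos rfl))

theorem statePerm_a_ne_one (i : ℕ) : statePerm k p x y (.a i) ≠ 1 := by
  induction i with
  | zero =>
    intro h
    simpa [statePerm_a_zero, shift, rooted_cons] using congrArg (· [0]) h
  | succ i ih => exact (hasSection_statePerm_a_succ i).ne_one ih

theorem statePerm_b_zero_ne_one : statePerm k p x y (.b 0) ≠ 1 :=
  hasSection_statePerm_b_zero_a.ne_one (statePerm_a_ne_one (k - 1))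

theorem exists_isGen_hasSection_shift (hk : 1 ≤ k) (hp : 1 ≤ p) :
    ∃ s u, IsGen k p s ∧ s ≠ .a 0 ∧ HasSection (statePerm k p x y s) u shift := by
  rw [← statePerm_a_zero k p x y]
  obtain rfl | hk_gt := hk.eq_or_lt
  · exact ⟨.b 0, x 0, Or.inr ⟨0, hp, rfl⟩, by simp, hasSection_statePerm_b_zero_a⟩
  · exact ⟨.a 1, x 0, Or.inl ⟨1, hk_gt, rfl⟩, by simp, hasSection_statePerm_a_succ 0⟩

theorem exists_isGen_hasSection_b_zero (hp : 1 ≤ p) (hxy : x (k - 1) ≠ y (p - 1)) :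
    ∃ t v, IsGen k p t ∧ t ≠ .a 0 ∧
      HasSection (statePerm k p x y t) v (statePerm k p x y (.b 0)) := by
  obtain rfl | hp_gt := hp.eq_or_lt
  · exact ⟨.b 0, y 0, Or.inr ⟨0, hp, rfl⟩, by simp, hasSection_statePerm_b_zero_b hxy⟩
  · exact ⟨.b 1, y 0, Or.inr ⟨1, hp_gt, rfl⟩, by simp, hasSection_statePerm_b_succ 0⟩

end KneadingAutomaton

theorem stmt11_general.{u} (k p : ℕ) (hk : 1 ≤ k) (hp : 1 ≤ p) (x y : ℕ → ℤ)
    (hxy : x (k - 1) ≠ y (p - 1)) :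
    ∃ g : ↥(Kgroup k p x y), g ≠ 1 ∧
      ∀ (F : Type u) [Group F] (φ : ↥(Kgroup k p x y) →* F), IsMulTorsion F → φ g = 1 := by
  obtain ⟨s, u, hs, hs_ne, hsu⟩ := exists_isGen_hasSection_shift (x := x) (y := y) hk hp
  obtain ⟨t, v, ht, ht_ne, htv⟩ := exists_isGen_hasSection_b_zero hp hxy
  have hshift : shift ∈ Kgroup k p x y :=
    statePerm_a_zero k p x y ▸ statePerm_mem_Kgroup (Or.inl ⟨0, hk, rfl⟩)
  obtain ⟨g, hg_ne, hg⟩ := exists_ne_one_forall_map_eq_one_of_isOfFinOrder_map_shift hshift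
    (statePerm_mem_Kgroup hs) (statePerm_mem_Kgroup ht) (finitelyActive_statePerm hs_ne)
    (finitelyActive_statePerm ht_ne) (finitelyActive_statePerm (by simp))
    statePerm_b_zero_ne_one hsu htv
  exact ⟨g, hg_ne, fun F _ φ hF => hg F φ (hF _)⟩

theorem stmt11 (k p : ℕ) (hk : 1 ≤ k) (hp : 1 ≤ p) (x y : ℕ → ℤ)
    (hxy : x (k - 1) ≠ y (p - 1)) :
    ∃ g : ↥(Kgroup k p x y), g ≠ 1 ∧
      ∀ (F : Type) [Group F] [Finite F] (φ : ↥(Kgroup k p x y) →* F), φ g = 1 := by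
  obtain ⟨g, hg_ne, hg⟩ := stmt11_general k p hk hp x y hxy
  exact ⟨g, hg_ne, fun F _ _ φ => hg F φ isMulTorsion_of_finite⟩
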